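/- Let φ = C_1 ∧ ⋯ ∧ C_k be a 3-SAT formula in Boolean variables y_1, …, y_n, where each clause C_i = y_{i_1}^{τ_{i_1}} ∨ y_{i_2}^{τ_{i_2}} ∨ y_{i_3}^{τ_{i_3}} is a disjunction of three literals on pairwise distinct variables (here y^1 = y and y^0 = ¬y). For 1 ≤ j ≤ n let h_j be the tropical polynomial x ↦ min(2x_j, x_j, 1) in n variables, and for 1 ≤ i ≤ k let f_i be the tropical product (0·x_{i_1} ⊕ τ_{i_1}) ⊙ (0·x_{i_2} ⊕ τ_{i_2}) ⊙ (0·x_{i_3} ⊕ τ_{i_3}). Then the tropical prevariety P = ⋂_{j=1}^n T(h_j) ∩ ⋂_{i=1}^k T(f_i) is a finite set, and its cardinality equals the number of satisfying assignments of φ. -/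

import Mathlib

/-!
The exponents at which a tropical product attains its minimum are the sums of those at which the
factors do, so the hypersurface of a product is the union of the hypersurfaces of its factors, even
when the factors share variables. Let `s` send `False` to `0` and `True` to `1`. The hypersurface of
`0·x_j ⊕ s(τ)` is the hyperplane `x_j = s(τ)`, hence `h_j = (0·x_j ⊕ 0) ⊙ (0·x_j ⊕ 1)` forces
`x_j ∈ {0, 1}`, and the `T(h_j)` meet in the vertices of the unit cube. Likewise the vertex `s ∘ a`
lies on `T(f_i)` exactly when the assignment `a` makes a literal of the `i`-th clause true.
-/

open Finset Pointwise

/-- The affine-linear function given by a tropical term with coefficient `c`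
and exponent vector `α`. -/
def tropTerm {n : ℕ} (c : ℝ) (α : Fin n → ℕ) (x : Fin n → ℝ) : ℝ :=
  c + ∑ j, (α j : ℝ) * x j

/-- The tropical hypersurface of the tropical polynomial with support `A`
and coefficients `c`: the set of points where the minimum of the terms is
attained at least twice. -/
def tropHyp {n : ℕ} (A : Finset (Fin n → ℕ)) (c : (Fin n → ℕ) → ℝ) :
    Set (Fin n → ℝ) :=
  {x | ∃ α ∈ A, ∃ β ∈ A, α ≠ β ∧
    tropTerm (c α) α x = tropTerm (c β) β x ∧
    ∀ γ ∈ A, tropTerm (c α) α x ≤ tropTerm (c γ) γ x}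

/-- A tropical polynomial: a (finite) support of exponent vectors, and coefficients. -/
structure TropPoly (n : ℕ) where
  supp : Finset (Fin n → ℕ)
  coeff : (Fin n → ℕ) → ℝ

def TropPoly.hyp {n : ℕ} (f : TropPoly n) : Set (Fin n → ℝ) :=
  tropHyp f.supp f.coeff

/-- Tropical product of two tropical polynomials. -/
noncomputable def TropPoly.mul {n : ℕ} (f g : TropPoly n) : TropPoly n where
  supp := f.supp + g.supp
  coeff := fun γ =>
    sInf {r | ∃ α ∈ f.supp, ∃ β ∈ g.supp, α + β = γ ∧ r = f.coeff α + g.coeff β}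

/-- The tropical multiplicative unit (the constant polynomial `0`). -/
def TropPoly.one (n : ℕ) : TropPoly n := ⟨{0}, fun _ => 0⟩

/-- Tropical product of a list of tropical polynomials. -/
noncomputable def TropPoly.listProd {n : ℕ} (l : List (TropPoly n)) : TropPoly n :=
  l.foldr TropPoly.mul (TropPoly.one n)

/-- The exponent vector `k · e_i`. -/
def single {n : ℕ} (i : Fin n) (k : ℕ) : Fin n → ℕ :=
  fun j => if j = i then k else 0

/-- The structural tropical polynomial `h_j = 0·x_j² ⊕ 0·x_j ⊕ 1`. -/
def structuralPoly {n : ℕ} (j : Fin n) : TropPoly n :=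
  ⟨{single j 2, single j 1, 0}, fun α => if α = 0 then (1 : ℝ) else 0⟩

/-- The tropical polynomial `0·x_j ⊕ τ` encoding the literal `y_j^τ`
(with `s(True) = 1`, `s(False) = 0`). -/
def literalPoly {n : ℕ} (j : Fin n) (τ : Bool) : TropPoly n :=
  ⟨{single j 1, 0}, fun α => if α = 0 then (if τ then (1 : ℝ) else 0) else 0⟩

/-- The clause tropical polynomial
`f_i = (0·x_{i₁} ⊕ τ_{i₁}) ⊙ (0·x_{i₂} ⊕ τ_{i₂}) ⊙ (0·x_{i₃} ⊕ τ_{i₃})`. -/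
noncomputable def clausePoly {n : ℕ} (idx : Fin 3 → Fin n) (τ : Fin 3 → Bool) :
    TropPoly n :=
  TropPoly.listProd [literalPoly (idx 0) (τ 0), literalPoly (idx 1) (τ 1),
    literalPoly (idx 2) (τ 2)]

/-- A Boolean assignment `a` satisfies the 3-SAT formula with clauses given by
variable indices `idx i` and signs `sgn i` (literal `y^1 = y`, `y^0 = ¬y`) iff
in every clause some literal evaluates to `True`. -/
def Satisfies {n k : ℕ} (idx : Fin k → Fin 3 → Fin n)
    (sgn : Fin k → Fin 3 → Bool) (a : Fin n → Bool) : Prop :=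
  ∀ i : Fin k, ∃ r : Fin 3, a (idx i r) = sgn i r

namespace TropPoly

section Product

variable {n : ℕ} {f g : TropPoly n} {α β γ : Fin n → ℕ} {x : Fin n → ℝ}

/-- The affine-linear function of the term of `f` with exponent vector `α`; only meaningful for
`α ∈ f.supp`, as the coefficients off the support are arbitrary. -/
def termAt (f : TropPoly n) (α : Fin n → ℕ) (x : Fin n → ℝ) : ℝ :=
  tropTerm (f.coeff α) α x

/-- The support of the initial form `in_x(f)`: the exponents whose terms attain the minimum
defining `f` at `x`. -/
def initialSupp (f : TropPoly n) (x : Fin n → ℝ) : Set (Fin n → ℕ) :=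
  {α | α ∈ f.supp ∧ ∀ γ ∈ f.supp, f.termAt α x ≤ f.termAt γ x}

lemma mem_hyp_iff_nontrivial_initialSupp : x ∈ f.hyp ↔ (f.initialSupp x).Nontrivial := by
  constructor
  · rintro ⟨α, hα, β, hβ, hne, heq, hmin⟩
    exact ⟨α, ⟨hα, hmin⟩, β, ⟨hβ, fun γ hγ => heq.symm.trans_le (hmin γ hγ)⟩, hne⟩
  · rintro ⟨α, ⟨hα, hαmin⟩, β, ⟨hβ, hβmin⟩, hne⟩
    exact ⟨α, hα, β, hβ, hne, (hαmin β hβ).antisymm (hβmin α hα), hαmin⟩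

lemma mem_hyp_of_supp_eq_pair (hf : f.supp = {α, β}) (hne : α ≠ β) :
    x ∈ f.hyp ↔ f.termAt α x = f.termAt β x := by
  constructor
  · rintro ⟨α', hα', β', hβ', hne', heq, -⟩
    simp only [hf, Finset.mem_insert, Finset.mem_singleton] at hα' hβ'
    rcases hα' with rfl | rfl <;> rcases hβ' with rfl | rfl
    exacts [absurd rfl hne', heq, heq.symm, absurd rfl hne']
  · intro heq
    refine ⟨α, by simp [hf], β, by simp [hf], hne, heq, ?_⟩
    simpa [hf, termAt] using heq.le

lemma initialSupp_nonempty (hf : f.supp.Nonempty) (x : Fin n → ℝ) : (f.initialSupp x).Nonempty :=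
  f.supp.exists_min_image (f.termAt · x) hf

lemma isLeast_coeff_mul (hγ : γ ∈ (f.mul g).supp) :
    IsLeast {r | ∃ α ∈ f.supp, ∃ β ∈ g.supp, α + β = γ ∧ r = f.coeff α + g.coeff β}
      ((f.mul g).coeff γ) := by
  set S := {r | ∃ α ∈ f.supp, ∃ β ∈ g.supp, α + β = γ ∧ r = f.coeff α + g.coeff β}
  have hfin : S.Finite := by
    refine ((f.supp.image f.coeff) + (g.supp.image g.coeff)).finite_toSet.subset ?_
    rintro _ ⟨α, hα, β, hβ, -, rfl⟩
    exact Finset.add_mem_add (mem_image_of_mem _ hα) (mem_image_of_mem _ hβ)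
  have hne : S.Nonempty := by
    obtain ⟨α, hα, β, hβ, hsum⟩ := Finset.mem_add.1 hγ
    exact ⟨_, α, hα, β, hβ, hsum, rfl⟩
  exact ⟨hne.csInf_mem hfin, fun _ hr => csInf_le hfin.bddBelow hr⟩

lemma tropTerm_add (c d : ℝ) (α β : Fin n → ℕ) (x : Fin n → ℝ) :
    tropTerm (c + d) (α + β) x = tropTerm c α x + tropTerm d β x := by
  simp only [tropTerm, Pi.add_apply, Nat.cast_add, add_mul, Finset.sum_add_distrib]
  ring

lemma termAt_mul_le (hα : α ∈ f.supp) (hβ : β ∈ g.supp) (x : Fin n → ℝ) :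
    (f.mul g).termAt (α + β) x ≤ f.termAt α x + g.termAt β x := by
  have hcoeff : (f.mul g).coeff (α + β) ≤ f.coeff α + g.coeff β :=
    (isLeast_coeff_mul (Finset.add_mem_add hα hβ)).2 ⟨α, hα, β, hβ, rfl, rfl⟩
  simp only [termAt, ← tropTerm_add]
  exact add_le_add_left hcoeff _

lemma exists_termAt_mul_eq (hγ : γ ∈ (f.mul g).supp) (x : Fin n → ℝ) :
    ∃ α ∈ f.supp, ∃ β ∈ g.supp, α + β = γ ∧
      (f.mul g).termAt γ x = f.termAt α x + g.termAt β x := by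
  obtain ⟨α, hα, β, hβ, rfl, hcoeff⟩ := (isLeast_coeff_mul hγ).1
  exact ⟨α, hα, β, hβ, rfl, by simp only [termAt, hcoeff, tropTerm_add]⟩

lemma initialSupp_mul (f g : TropPoly n) (x : Fin n → ℝ) :
    (f.mul g).initialSupp x = f.initialSupp x + g.initialSupp x := by
  ext γ
  constructor
  · rintro ⟨hγ, hmin⟩
    obtain ⟨α, hα, β, hβ, rfl, hterm⟩ := exists_termAt_mul_eq hγ x
    have hle : ∀ α' ∈ f.supp, ∀ β' ∈ g.supp,
        f.termAt α x + g.termAt β x ≤ f.termAt α' x + g.termAt β' x := fun α' hα' β' hβ' =>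
      calc f.termAt α x + g.termAt β x
        _ = (f.mul g).termAt (α + β) x := hterm.symm
        _ ≤ (f.mul g).termAt (α' + β') x := hmin _ (Finset.add_mem_add hα' hβ')
        _ ≤ f.termAt α' x + g.termAt β' x := termAt_mul_le hα' hβ' x
    exact Set.add_mem_add ⟨hα, fun α' hα' => le_of_add_le_add_right (hle α' hα' β hβ)⟩
      ⟨hβ, fun β' hβ' => le_of_add_le_add_left (hle α hα β' hβ')⟩
  · rintro ⟨α, ⟨hα, hαmin⟩, β, ⟨hβ, hβmin⟩, rfl⟩
    refine ⟨Finset.add_mem_add hα hβ, fun γ hγ => ?_⟩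
    obtain ⟨α', hα', β', hβ', -, hterm⟩ := exists_termAt_mul_eq hγ x
    calc (f.mul g).termAt (α + β) x
      _ ≤ f.termAt α x + g.termAt β x := termAt_mul_le hα hβ x
      _ ≤ f.termAt α' x + g.termAt β' x := add_le_add (hαmin α' hα') (hβmin β' hβ')
      _ = (f.mul g).termAt γ x := hterm.symm

lemma hyp_mul (hf : f.supp.Nonempty) (hg : g.supp.Nonempty) :
    (f.mul g).hyp = f.hyp ∪ g.hyp := by
  ext x
  simp only [Set.mem_union, mem_hyp_iff_nontrivial_initialSupp, initialSupp_mul]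
  constructor
  · contrapose!
    exact fun ⟨hfx, hgx⟩ => hfx.image2 hgx _
  · rintro (h | h)
    · exact h.add_right (initialSupp_nonempty hg x)
    · exact h.add_left (initialSupp_nonempty hf x)

lemma hyp_one (n : ℕ) : (one n).hyp = ∅ := by
  ext x
  simp [hyp, tropHyp, one]

lemma supp_listProd_nonempty {l : List (TropPoly n)} (hl : ∀ f ∈ l, f.supp.Nonempty) :
    (listProd l).supp.Nonempty := by
  induction l with
  | nil => exact singleton_nonempty 0
  | cons f l ih =>
    rw [List.forall_mem_cons] at hl
    exact hl.1.add (ih hl.2)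

lemma mem_hyp_listProd {l : List (TropPoly n)} (hl : ∀ f ∈ l, f.supp.Nonempty) :
    x ∈ (listProd l).hyp ↔ ∃ f ∈ l, x ∈ f.hyp := by
  induction l with
  | nil => simp [listProd, hyp_one]
  | cons f l ih =>
    rw [List.forall_mem_cons] at hl
    change x ∈ (f.mul (listProd l)).hyp ↔ _
    rw [hyp_mul hl.1 (supp_listProd_nonempty hl.2), Set.mem_union, ih hl.2]
    simp only [List.mem_cons, exists_eq_or_imp]

end Product

end TropPoly

section Encoding

variable {n : ℕ} {x : Fin n → ℝ}

lemma single_injective (j : Fin n) : Function.Injective (single j) := fun k l h => by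
  simpa [single] using congrFun h j

lemma single_ne_zero {j : Fin n} {k : ℕ} (hk : k ≠ 0) : single j k ≠ 0 := fun h =>
  hk (by simpa [single] using congrFun h j)

lemma single_add (j : Fin n) (k l : ℕ) : single j (k + l) = single j k + single j l := by
  ext i
  by_cases h : i = j <;> simp [single, h]

lemma tropTerm_single (c : ℝ) (j : Fin n) (k : ℕ) (x : Fin n → ℝ) :
    tropTerm c (single j k) x = c + k * x j := by
  simp [tropTerm, single]

lemma tropTerm_zero (c : ℝ) (x : Fin n → ℝ) : tropTerm c 0 x = c := by
  simp [tropTerm]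

/-- The map `s` encoding truth values as real numbers, `False ↦ 0` and `True ↦ 1`. -/
def truthValue (τ : Bool) : ℝ := if τ then 1 else 0

lemma truthValue_injective : Function.Injective truthValue := fun a b h => by
  cases a <;> cases b <;> simp_all [truthValue]

lemma literalPoly_supp_nonempty (j : Fin n) (τ : Bool) : (literalPoly j τ).supp.Nonempty :=
  insert_nonempty _ _

lemma mem_hyp_literalPoly {j : Fin n} {τ : Bool} :
    x ∈ (literalPoly j τ).hyp ↔ x j = truthValue τ := by
  have hne : single j 1 ≠ 0 := single_ne_zero one_ne_zero
  rw [TropPoly.mem_hyp_of_supp_eq_pair rfl hne]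
  simp [TropPoly.termAt, literalPoly, hne, tropTerm_single, tropTerm_zero, truthValue]

lemma structuralPoly_eq_mul (j : Fin n) :
    structuralPoly j = (literalPoly j false).mul (literalPoly j true) := by
  have h10 : single j 1 ≠ 0 := single_ne_zero one_ne_zero
  have h20 : single j 2 ≠ 0 := single_ne_zero two_ne_zero
  have h21 : single j 2 ≠ single j 1 := (single_injective j).ne (by decide)
  have hsq : single j 1 + single j 1 = single j 2 := (single_add j 1 1).symm
  refine congrArg₂ TropPoly.mk ?_ (funext fun γ => ?_)
  · ext γ
    simp only [literalPoly, Finset.mem_add, Finset.mem_insert, Finset.mem_singleton,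
      exists_eq_or_imp, exists_eq_left, hsq, add_zero, zero_add, eq_comm (b := γ)]
    tauto
  · have hset : {r | ∃ α ∈ (literalPoly j false).supp, ∃ β ∈ (literalPoly j true).supp,
          α + β = γ ∧ r = (literalPoly j false).coeff α + (literalPoly j true).coeff β} =
        {r : ℝ | γ = single j 2 ∧ r = 0 ∨ γ = single j 1 ∧ (r = 1 ∨ r = 0) ∨ γ = 0 ∧ r = 1} := by
      ext r
      simp only [literalPoly, Finset.mem_insert, Finset.mem_singleton, exists_eq_or_imp,
        exists_eq_left, hsq, h10, add_zero, zero_add, eq_comm (b := γ), Set.mem_ofPred_eq,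
        if_true, if_false, Bool.false_eq_true]
      tauto
    rw [hset]
    have hmin : sInf {r : ℝ | r = 1 ∨ r = 0} = 0 := (csInf_pair 1 0).trans (by simp)
    by_cases h0 : γ = 0
    · simp [h0, h10.symm, h20.symm]
    by_cases h1 : γ = single j 1
    · simp [h1, h10, h21.symm, hmin]
    by_cases h2 : γ = single j 2
    · simp [h2, h20, h21]
    -- Off the support both coefficients are `0`, on the right because `sInf ∅ = 0`.
    · simp [h0, h1, h2]

lemma mem_hyp_structuralPoly {j : Fin n} :
    x ∈ (structuralPoly j).hyp ↔ x j ∈ Set.range truthValue := by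
  rw [structuralPoly_eq_mul,
    TropPoly.hyp_mul (literalPoly_supp_nonempty j false) (literalPoly_supp_nonempty j true)]
  simp only [Set.mem_union, mem_hyp_literalPoly, Set.mem_range, Bool.exists_bool, eq_comm]

lemma iInter_hyp_structuralPoly (n : ℕ) :
    ⋂ j : Fin n, (structuralPoly j).hyp = Set.range fun a : Fin n → Bool => truthValue ∘ a := by
  ext x
  simp only [Set.mem_iInter, mem_hyp_structuralPoly, Set.mem_range, funext_iff,
    Function.comp_apply, Classical.skolem]

/-- The tropical polynomial encoding a clause of arbitrary length, given as the list of the pairs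
`(j, τ)` for its literals `y_j^τ`. -/
noncomputable def clauseProd (C : List (Fin n × Bool)) : TropPoly n :=
  TropPoly.listProd (C.map fun l => literalPoly l.1 l.2)

lemma mem_hyp_clauseProd {C : List (Fin n × Bool)} :
    x ∈ (clauseProd C).hyp ↔ ∃ l ∈ C, x l.1 = truthValue l.2 := by
  have hsupp : ∀ f ∈ C.map fun l => literalPoly l.1 l.2, f.supp.Nonempty :=
    List.forall_mem_map.2 fun l _ => literalPoly_supp_nonempty l.1 l.2
  simp only [clauseProd, TropPoly.mem_hyp_listProd hsupp, List.mem_map, exists_exists_and_eq_and,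
    mem_hyp_literalPoly]

lemma prevariety_eq_image {ι : Sort*} (C : ι → List (Fin n × Bool)) :
    (⋂ j, (structuralPoly j).hyp) ∩ ⋂ i, (clauseProd (C i)).hyp =
      (fun a => truthValue ∘ a) '' {a : Fin n → Bool | ∀ i, ∃ l ∈ C i, a l.1 = l.2} := by
  rw [iInter_hyp_structuralPoly, ← Set.image_preimage_eq_range_inter]
  congr 1
  ext a
  simp only [Set.mem_preimage, Set.mem_iInter, mem_hyp_clauseProd, Function.comp_apply,
    truthValue_injective.eq_iff, Set.mem_ofPred_eq]

theorem sat_prevariety_count_general {ι : Sort*} (C : ι → List (Fin n × Bool)) :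
    ((⋂ j, (structuralPoly j).hyp) ∩ ⋂ i, (clauseProd (C i)).hyp).Finite ∧
    ((⋂ j, (structuralPoly j).hyp) ∩ ⋂ i, (clauseProd (C i)).hyp).ncard
      = Nat.card {a : Fin n → Bool // ∀ i, ∃ l ∈ C i, a l.1 = l.2} := by
  rw [prevariety_eq_image]
  exact ⟨(Set.toFinite _).image _, Set.ncard_image_of_injective _ truthValue_injective.comp_left⟩

lemma clausePoly_eq_clauseProd (idx : Fin 3 → Fin n) (τ : Fin 3 → Bool) :
    clausePoly idx τ = clauseProd (List.ofFn fun r => (idx r, τ r)) := by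
  simp [clausePoly, clauseProd, List.ofFn_succ]

end Encoding

/-- The tropical prevariety built from the structural hypersurfaces `T(h_j)`
and the clause hypersurfaces `T(f_i)` of a 3-SAT formula is a finite set whose
cardinality is the number of satisfying assignments of the formula. -/
theorem sat_prevariety_count (n k : ℕ) (idx : Fin k → Fin 3 → Fin n)
    (sgn : Fin k → Fin 3 → Bool)
    (hdistinct : ∀ i, Function.Injective (idx i)) :
    ((⋂ j : Fin n, (structuralPoly j).hyp) ∩
        ⋂ i : Fin k, (clausePoly (idx i) (sgn i)).hyp).Finite ∧
    ((⋂ j : Fin n, (structuralPoly j).hyp) ∩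
        ⋂ i : Fin k, (clausePoly (idx i) (sgn i)).hyp).ncard
      = Nat.card {a : Fin n → Bool // Satisfies idx sgn a} := by
  simpa only [clausePoly_eq_clauseProd, List.mem_ofFn, exists_exists_eq_and, Satisfies]
    using
    sat_prevariety_count_general fun i => List.ofFn fun r => (idx i r, sgn i r)
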